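/- For every natural number j, the element s·r^(2j+1) of G has order exactly 4. -/

import Mathlib

/-!
Put `M = 2 ^ (k - 1) * p`. Then `z = r ^ M` is an involution commuting with `r`, and the relation
says that `s` inverts `r` up to `z`. Hence `(s * r ^ m) ^ 2 = z ^ m`, which is `z` for odd `m`, so
that `s * r ^ m` is a square root of an involution.
-/

theorem orderOf_eq_prime_sq_of_orderOf_pow {M : Type*} [Monoid M] {x : M} {p : ℕ} [Fact p.Prime]
    (hx : orderOf (x ^ p) = p) : orderOf x = p ^ 2 := by
  obtain ⟨hpow, hne⟩ := orderOf_eq_prime_iff.mp hx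
  exact orderOf_eq_prime_pow (by rwa [pow_one]) (by rwa [pow_succ, pow_one, pow_mul])

section

variable {G : Type*} [Group G] {r s z : G}

theorem mul_zpow_sq_of_conj_eq_mul_inv (hs : s ^ 2 = 1) (hzr : Commute z r)
    (hrs : s * r * s⁻¹ = z * r⁻¹) (m : ℤ) : (s * r ^ m) ^ 2 = z ^ m := by
  have hinv : s⁻¹ = s := inv_eq_of_mul_eq_one_left (by rw [← sq, hs])
  calc (s * r ^ m) ^ 2 = s * r ^ m * s⁻¹ * r ^ m := by rw [hinv, sq, ← mul_assoc]
    _ = (z * r⁻¹) ^ m * r ^ m := by rw [← conj_zpow, hrs]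
    _ = z ^ m := by rw [hzr.inv_right.mul_zpow, inv_zpow, inv_mul_cancel_right]

theorem zpow_eq_self_of_sq_eq_one (hz : z ^ 2 = 1) {m : ℤ} (hm : Odd m) : z ^ m = z := by
  obtain ⟨n, rfl⟩ := hm
  rw [zpow_add_one, zpow_mul, zpow_ofNat, hz, one_zpow, one_mul]

theorem order_of_s_mul_r_odd_pow_general (hs : s ^ 2 = 1) (hz : orderOf z = 2)
    (hzr : Commute z r) (hrs : s * r * s⁻¹ = z * r⁻¹) {m : ℤ} (hm : Odd m) :
    orderOf (s * r ^ m) = 4 := by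
  have hsq : (s * r ^ m) ^ 2 = z := by
    rw [mul_zpow_sq_of_conj_eq_mul_inv hs hzr hrs,
      zpow_eq_self_of_sq_eq_one (orderOf_dvd_iff_pow_eq_one.mp hz.dvd) hm]
  exact orderOf_eq_prime_sq_of_orderOf_pow (hsq ▸ hz)

end

theorem order_of_s_mul_r_odd_pow {G : Type*} [Group G] [Fintype G] (k p : ℕ) (hk : 2 ≤ k)
    (hp : p.Prime) (hp2 : p ≠ 2) (hcard : Fintype.card G = 2 ^ (k + 1) * p)
    (r s : G) (hr : orderOf r = 2 ^ k * p) (hs : orderOf s = 2)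
    (hrs : s * r * s⁻¹ = r ^ (2 ^ (k - 1) * p - 1))
    (hgen : Subgroup.closure ({r, s} : Set G) = ⊤) :
    ∀ j : ℕ, orderOf (s * r ^ (2 * j + 1)) = 4 := by
  intro j
  have hM : 0 < 2 ^ (k - 1) * p := Nat.mul_pos (by positivity) hp.pos
  have hr' : orderOf r = 2 * (2 ^ (k - 1) * p) := by
    rw [hr, ← mul_assoc, mul_pow_sub_one (by lia)]
  have hz : orderOf (r ^ (2 ^ (k - 1) * p)) = 2 := by
    rw [orderOf_pow_of_dvd hM.ne' (Dvd.intro_left 2 hr'.symm), hr', Nat.mul_div_cancel _ hM]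
  have hrs' : s * r * s⁻¹ = r ^ (2 ^ (k - 1) * p) * r⁻¹ := by rw [hrs, pow_sub r hM, pow_one]
  have hm : Odd ((2 * j + 1 : ℕ) : ℤ) := (odd_two_mul_add_one j).natCast
  rw [← zpow_natCast]
  exact order_of_s_mul_r_odd_pow_general (orderOf_dvd_iff_pow_eq_one.mp hs.dvd) hz
    (Commute.pow_self r _) hrs' hm
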